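/- arXiv:2202.13579 — 2 statements merged into one kernel-verified Lean document; each statement's English description precedes it below -/
import Mathlib

section
/- For random vectors U ∈ ℝ^p and V ∈ ℝ^q with E(|U| + |V|) < ∞, the squared distance covariance V²(U,V) = E|U−U'||V−V'| + E|U−U'|·E|V−V'| − E|U−U'||V−V''| − E|U−U''||V−V'| is nonnegative, where (U,V), (U',V'), (U'',V'') are i.i.d. copies. -/
open MeasureTheory ProbabilityTheory

/-- Squared distance covariance of two random elements, via the moment formula with
independent copies realized as product measures. -/
noncomputable def dcov2 {Ω E F : Type*} [MeasurableSpace Ω]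
    [NormedAddCommGroup E] [NormedAddCommGroup F]
    (μ : Measure Ω) (U : Ω → E) (V : Ω → F) : ℝ :=
  (∫ ω, ‖U ω.1 - U ω.2‖ * ‖V ω.1 - V ω.2‖ ∂(μ.prod μ))
  + (∫ ω, ‖U ω.1 - U ω.2‖ ∂(μ.prod μ)) * (∫ ω, ‖V ω.1 - V ω.2‖ ∂(μ.prod μ))
  - (∫ ω, ‖U ω.1 - U ω.2.1‖ * ‖V ω.1 - V ω.2.2‖ ∂(μ.prod (μ.prod μ)))
  - (∫ ω, ‖U ω.1 - U ω.2.2‖ * ‖V ω.1 - V ω.2.1‖ ∂(μ.prod (μ.prod μ)))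

section helpers
open scoped ENNReal

/-- bounded measurable monomials are integrable -/
lemma aux_mono_int {Ω : Type*} [MeasurableSpace Ω] (μ : Measure Ω) [IsProbabilityMeasure μ]
    (a b : Ω → ℝ) (ha : Measurable a) (hb : Measurable b) (ha1 : ∀ ω, |a ω| ≤ 1)
    (hb1 : ∀ ω, |b ω| ≤ 1) (i j : ℕ) : Integrable (fun ω => a ω ^ i * b ω ^ j) μ := by
  refine Integrable.of_bound (C := 1) (by fun_prop) (Filter.Eventually.of_forall fun ω => ?_)
  rw [Real.norm_eq_abs, abs_mul, abs_pow, abs_pow]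
  exact mul_le_one₀ (pow_le_one₀ (abs_nonneg _) (ha1 ω)) (by positivity)
    (pow_le_one₀ (abs_nonneg _) (hb1 ω))

noncomputable def auxc : ℕ → ℝ := fun i => if i = 1 then -2 else 1

lemma aux_sq (x y : ℝ) : (x - y) ^ 2 = ∑ i ∈ Finset.range 3, auxc i * (x ^ i * y ^ (2 - i)) := by
  simp [Finset.sum_range_succ, auxc]; ring

lemma aux_two (x y x' y' : ℝ) : (x - y) ^ 2 * (x' - y') ^ 2 =
    ∑ i ∈ Finset.range 3, ∑ j ∈ Finset.range 3,
      auxc i * auxc j * ((x ^ i * x' ^ j) * (y ^ (2 - i) * y' ^ (2 - j))) := by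
  rw [aux_sq, aux_sq, Finset.sum_mul_sum]
  refine Finset.sum_congr rfl fun i _ => Finset.sum_congr rfl fun j _ => by ring

lemma aux_real {Ω : Type*} [MeasurableSpace Ω] (μ : Measure Ω) [IsProbabilityMeasure μ]
    (a b : Ω → ℝ) (ha : Measurable a) (hb : Measurable b) (ha1 : ∀ ω, |a ω| ≤ 1)
    (hb1 : ∀ ω, |b ω| ≤ 1) :
    (∫ ω, (a ω.1 - a ω.2.1) ^ 2 * (b ω.1 - b ω.2.2) ^ 2 ∂(μ.prod (μ.prod μ))) +
    (∫ ω, (a ω.1 - a ω.2.2) ^ 2 * (b ω.1 - b ω.2.1) ^ 2 ∂(μ.prod (μ.prod μ))) ≤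
    (∫ ω, (a ω.1 - a ω.2) ^ 2 * (b ω.1 - b ω.2) ^ 2 ∂(μ.prod μ)) +
    (∫ ω, (a ω.1.1 - a ω.1.2) ^ 2 * (b ω.2.1 - b ω.2.2) ^ 2 ∂((μ.prod μ).prod (μ.prod μ))) := by
  have hI := aux_mono_int μ a b ha hb ha1 hb1
  have hIa : ∀ i, Integrable (fun ω => a ω ^ i) μ := fun i => by simpa using hI i 0
  have hIb : ∀ i, Integrable (fun ω => b ω ^ i) μ := fun i => by simpa using hI 0 i
  have key : ∀ {X : Type _} [MeasurableSpace X] (m : Measure X) (f : ℕ → ℕ → X → ℝ)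
      (_ : ∀ i j, Integrable (f i j) m),
      ∫ x, (∑ i ∈ Finset.range 3, ∑ j ∈ Finset.range 3, auxc i * auxc j * f i j x) ∂m
      = ∑ i ∈ Finset.range 3, ∑ j ∈ Finset.range 3, auxc i * auxc j * ∫ x, f i j x ∂m := by
    intro X _ m f hf
    rw [integral_finsetSum _ fun i _ => integrable_finsetSum _ fun j _ => (hf i j).const_mul _]
    refine Finset.sum_congr rfl fun i _ => ?_
    rw [integral_finsetSum _ fun j _ => (hf i j).const_mul _]
    refine Finset.sum_congr rfl fun j _ => ?_
    rw [integral_const_mul]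
  have e1 := key (μ.prod μ) (fun i j ω => (a ω.1 ^ i * b ω.1 ^ j) *
    (a ω.2 ^ (2 - i) * b ω.2 ^ (2 - j))) (fun i j => (hI i j).mul_prod (hI _ _))
  have e3 := key (μ.prod (μ.prod μ)) (fun i j ω => (a ω.1 ^ i * b ω.1 ^ j) *
    (a ω.2.1 ^ (2 - i) * b ω.2.2 ^ (2 - j)))
    (fun i j => (hI i j).mul_prod ((hIa _).mul_prod (hIb _)))
  have e4 := key (μ.prod (μ.prod μ)) (fun i j ω => (a ω.1 ^ i * b ω.1 ^ j) *
    (b ω.2.1 ^ (2 - j) * a ω.2.2 ^ (2 - i)))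
    (fun i j => (hI i j).mul_prod ((hIb _).mul_prod (hIa _)))
  have e2 := key ((μ.prod μ).prod (μ.prod μ)) (fun i j ω => (a ω.1.1 ^ i * a ω.1.2 ^ (2 - i)) *
    (b ω.2.1 ^ j * b ω.2.2 ^ (2 - j)))
    (fun i j => ((hIa _).mul_prod (hIa _)).mul_prod ((hIb _).mul_prod (hIb _)))
  have m3 : ∀ i j k l : ℕ, ∫ ω : Ω × Ω × Ω, (a ω.1 ^ i * b ω.1 ^ j) *
      (a ω.2.1 ^ k * b ω.2.2 ^ l) ∂(μ.prod (μ.prod μ)) =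
      (∫ ω, a ω ^ i * b ω ^ j ∂μ) * ((∫ ω, a ω ^ k ∂μ) * (∫ ω, b ω ^ l ∂μ)) := by
    intro i j k l
    rw [← integral_prod_mul (μ := μ) (ν := μ) (fun ω => a ω ^ k) (fun ω => b ω ^ l),
      ← integral_prod_mul]
  have m4 : ∀ i j k l : ℕ, ∫ ω : Ω × Ω × Ω, (a ω.1 ^ i * b ω.1 ^ j) *
      (b ω.2.1 ^ k * a ω.2.2 ^ l) ∂(μ.prod (μ.prod μ)) =
      (∫ ω, a ω ^ i * b ω ^ j ∂μ) * ((∫ ω, b ω ^ k ∂μ) * (∫ ω, a ω ^ l ∂μ)) := by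
    intro i j k l
    rw [← integral_prod_mul (μ := μ) (ν := μ) (fun ω => b ω ^ k) (fun ω => a ω ^ l),
      ← integral_prod_mul]
  have m1 : ∀ i j k l : ℕ, ∫ ω : Ω × Ω, (a ω.1 ^ i * b ω.1 ^ j) *
      (a ω.2 ^ k * b ω.2 ^ l) ∂(μ.prod μ) =
      (∫ ω, a ω ^ i * b ω ^ j ∂μ) * (∫ ω, a ω ^ k * b ω ^ l ∂μ) := by
    intro i j k l
    rw [← integral_prod_mul]
  have m2 : ∀ i j k l : ℕ, ∫ ω : (Ω × Ω) × (Ω × Ω), (a ω.1.1 ^ i * a ω.1.2 ^ j) *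
      (b ω.2.1 ^ k * b ω.2.2 ^ l) ∂((μ.prod μ).prod (μ.prod μ)) =
      ((∫ ω, a ω ^ i ∂μ) * (∫ ω, a ω ^ j ∂μ)) * ((∫ ω, b ω ^ k ∂μ) * (∫ ω, b ω ^ l ∂μ)) := by
    intro i j k l
    rw [← integral_prod_mul (μ := μ) (ν := μ) (fun ω => b ω ^ k) (fun ω => b ω ^ l),
      ← integral_prod_mul (μ := μ) (ν := μ) (fun ω => a ω ^ i) (fun ω => a ω ^ j),
      ← integral_prod_mul]
  simp only [m1] at e1
  simp only [m2] at e2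
  simp only [m3] at e3
  simp only [m4] at e4
  have f1 : ∀ ω : Ω × Ω, (a ω.1 - a ω.2) ^ 2 * (b ω.1 - b ω.2) ^ 2 = _ :=
    fun ω => aux_two _ _ _ _
  have f3 : ∀ ω : Ω × Ω × Ω, (a ω.1 - a ω.2.1) ^ 2 * (b ω.1 - b ω.2.2) ^ 2 = _ :=
    fun ω => aux_two _ _ _ _
  have f4 : ∀ ω : Ω × Ω × Ω, (a ω.1 - a ω.2.2) ^ 2 * (b ω.1 - b ω.2.1) ^ 2 =
     ∑ i ∈ Finset.range 3, ∑ j ∈ Finset.range 3,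
      auxc i * auxc j * ((a ω.1 ^ i * b ω.1 ^ j) * (b ω.2.1 ^ (2 - j) * a ω.2.2 ^ (2 - i))) := by
    intro ω
    rw [aux_two]
    refine Finset.sum_congr rfl fun i _ => Finset.sum_congr rfl fun j _ => by ring
  have f2 : ∀ ω : (Ω × Ω) × (Ω × Ω), (a ω.1.1 - a ω.1.2) ^ 2 * (b ω.2.1 - b ω.2.2) ^ 2 =
     ∑ i ∈ Finset.range 3, ∑ j ∈ Finset.range 3,
      auxc i * auxc j * ((a ω.1.1 ^ i * a ω.1.2 ^ (2 - i)) *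
        (b ω.2.1 ^ j * b ω.2.2 ^ (2 - j))) := by
    intro ω
    rw [aux_two]
    refine Finset.sum_congr rfl fun i _ => Finset.sum_congr rfl fun j _ => by ring
  simp only [f1, f2, f3, f4, e1, e2, e3, e4]
  simp [Finset.sum_range_succ, auxc]
  nlinarith [sq_nonneg ((∫ ω, a ω * b ω ∂μ) - (∫ ω, a ω ∂μ) * (∫ ω, b ω ∂μ))]

lemma aux_enn {Ω : Type*} [MeasurableSpace Ω] (μ : Measure Ω) [IsProbabilityMeasure μ]
    (a b : Ω → ℝ) (ha : Measurable a) (hb : Measurable b) (ha1 : ∀ ω, |a ω| ≤ 1)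
    (hb1 : ∀ ω, |b ω| ≤ 1) :
    (∫⁻ ω, .ofReal ((a ω.1 - a ω.2.1) ^ 2) * .ofReal ((b ω.1 - b ω.2.2) ^ 2)
      ∂(μ.prod (μ.prod μ))) +
    (∫⁻ ω, .ofReal ((a ω.1 - a ω.2.2) ^ 2) * .ofReal ((b ω.1 - b ω.2.1) ^ 2)
      ∂(μ.prod (μ.prod μ))) ≤
    (∫⁻ ω, .ofReal ((a ω.1 - a ω.2) ^ 2) * .ofReal ((b ω.1 - b ω.2) ^ 2) ∂(μ.prod μ)) +
    (∫⁻ ω, .ofReal ((a ω.1.1 - a ω.1.2) ^ 2) * .ofReal ((b ω.2.1 - b ω.2.2) ^ 2)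
      ∂((μ.prod μ).prod (μ.prod μ))) := by
  have key : ∀ {X : Type _} [MeasurableSpace X] (m : Measure X) [IsProbabilityMeasure m]
      (x y z w : X → Ω) (_ : Measurable x) (_ : Measurable y) (_ : Measurable z)
      (_ : Measurable w),
      ∫⁻ t, .ofReal ((a (x t) - a (y t)) ^ 2) * .ofReal ((b (z t) - b (w t)) ^ 2) ∂m =
      .ofReal (∫ t, (a (x t) - a (y t)) ^ 2 * (b (z t) - b (w t)) ^ 2 ∂m) := by
    intro X _ m _ x y z w hx hy hz hw
    rw [ofReal_integral_eq_lintegral_ofReal]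
    · refine lintegral_congr fun t => ?_
      rw [ENNReal.ofReal_mul (by positivity)]
    · refine Integrable.of_bound (C := 16) (by fun_prop) (Filter.Eventually.of_forall fun t => ?_)
      rw [Real.norm_eq_abs, abs_of_nonneg (by positivity)]
      have h1 := abs_le.1 (ha1 (x t))
      have h2 := abs_le.1 (ha1 (y t))
      have h3 := abs_le.1 (hb1 (z t))
      have h4 := abs_le.1 (hb1 (w t))
      have h5 : (a (x t) - a (y t)) ^ 2 ≤ 4 := by nlinarith
      have h6 : (b (z t) - b (w t)) ^ 2 ≤ 4 := by nlinarith
      nlinarith [sq_nonneg (a (x t) - a (y t)), sq_nonneg (b (z t) - b (w t))]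
    · exact Filter.Eventually.of_forall fun t => by positivity
  rw [key (μ.prod (μ.prod μ)) (fun ω => ω.1) (fun ω => ω.2.1) (fun ω => ω.1) (fun ω => ω.2.2)
      (by fun_prop) (by fun_prop) (by fun_prop) (by fun_prop),
    key (μ.prod (μ.prod μ)) (fun ω => ω.1) (fun ω => ω.2.2) (fun ω => ω.1) (fun ω => ω.2.1)
      (by fun_prop) (by fun_prop) (by fun_prop) (by fun_prop),
    key (μ.prod μ) (fun ω => ω.1) (fun ω => ω.2) (fun ω => ω.1) (fun ω => ω.2)
      (by fun_prop) (by fun_prop) (by fun_prop) (by fun_prop),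
    key ((μ.prod μ).prod (μ.prod μ)) (fun ω => ω.1.1) (fun ω => ω.1.2) (fun ω => ω.2.1)
      (fun ω => ω.2.2) (by fun_prop) (by fun_prop) (by fun_prop) (by fun_prop),
    ← ENNReal.ofReal_add (integral_nonneg fun _ => by positivity)
      (integral_nonneg fun _ => by positivity),
    ← ENNReal.ofReal_add (integral_nonneg fun _ => by positivity)
      (integral_nonneg fun _ => by positivity)]
  exact ENNReal.ofReal_le_ofReal (aux_real μ a b ha hb ha1 hb1)

/-- half-space indicator -/
noncomputable def auxg {n : ℕ} (s : EuclideanSpace ℝ (Fin n) × ℝ) (x : EuclideanSpace ℝ (Fin n)) :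
    ℝ := if s.2 < inner ℝ s.1 x then 1 else 0

lemma auxg_meas {n : ℕ} {X : Type*} [MeasurableSpace X]
    {f : X → EuclideanSpace ℝ (Fin n) × ℝ} {g : X → EuclideanSpace ℝ (Fin n)}
    (hf : Measurable f) (hg : Measurable g) : Measurable (fun x => auxg (f x) (g x)) := by
  unfold auxg
  refine Measurable.ite (measurableSet_lt (by fun_prop) (by fun_prop)) measurable_const
    measurable_const

lemma auxg_bd {n : ℕ} (s : EuclideanSpace ℝ (Fin n) × ℝ) (x : EuclideanSpace ℝ (Fin n)) :
    |auxg s x| ≤ 1 := by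
  unfold auxg; split_ifs <;> simp

noncomputable def auxnu (n : ℕ) : Measure (EuclideanSpace ℝ (Fin n) × ℝ) :=
  (volume.restrict (Metric.ball 0 1)).prod volume

instance (n : ℕ) : SFinite (auxnu n) := by unfold auxnu; infer_instance

lemma aux_1d (u v : ℝ) : ∫⁻ t, .ofReal (((if t < u then (1:ℝ) else 0) - (if t < v then 1 else 0)) ^ 2)
    = ENNReal.ofReal |u - v| := by
  have : ∀ t : ℝ, ENNReal.ofReal (((if t < u then (1:ℝ) else 0) - (if t < v then 1 else 0)) ^ 2)
    = (Set.Ico (min u v) (max u v)).indicator 1 t := by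
    intro t
    by_cases h1 : t < u <;> by_cases h2 : t < v <;> simp [h1, h2, Set.indicator]
  simp_rw [this]
  rw [lintegral_indicator_one measurableSet_Ico, Real.volume_Ico, max_sub_min_eq_abs']

lemma aux_lin (n : ℕ) : ∃ c : ℝ≥0∞, c ≠ 0 ∧ c ≠ ∞ ∧ ∀ x : EuclideanSpace ℝ (Fin n),
    ∫⁻ θ in Metric.ball (0 : EuclideanSpace ℝ (Fin n)) 1, .ofReal |inner ℝ θ x| =
      c * .ofReal ‖x‖ := by
  rcases subsingleton_or_nontrivial (EuclideanSpace ℝ (Fin n)) with h | h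
  · exact ⟨1, by simp, by simp, fun x => by simp [Subsingleton.elim x 0]⟩
  obtain ⟨e, he⟩ := exists_norm_eq (EuclideanSpace ℝ (Fin n)) (zero_le_one (α := ℝ))
  have hm : ∀ x : EuclideanSpace ℝ (Fin n), Measurable
      (fun θ : EuclideanSpace ℝ (Fin n) => ENNReal.ofReal |inner ℝ θ x|) := fun x => by fun_prop
  refine ⟨∫⁻ θ in Metric.ball (0 : EuclideanSpace ℝ (Fin n)) 1, .ofReal |inner ℝ θ e|,
    ?_, ?_, ?_⟩
  · intro h0
    rw [lintegral_eq_zero_iff (hm e)] at h0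
    have hS : IsOpen {θ : EuclideanSpace ℝ (Fin n) | 0 < inner ℝ θ e} :=
      isOpen_lt (by fun_prop) (by fun_prop)
    have hpos : 0 < volume ({θ : EuclideanSpace ℝ (Fin n) | 0 < inner ℝ θ e} ∩ Metric.ball 0 1) := by
      refine (hS.inter Metric.isOpen_ball).measure_pos _ ⟨(1/2 : ℝ) • e, ?_, ?_⟩
      · simp [inner_smul_left, he]
      · simp [norm_smul, he]; norm_num
    rw [← Measure.restrict_apply hS.measurableSet] at hpos
    refine hpos.ne' (measure_mono_null ?_ (ae_iff.1 h0))
    intro θ hθ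
    have hθ' : 0 < inner ℝ θ e := hθ
    simp [hθ'.ne']
  · refine ne_of_lt (lt_of_le_of_lt (b := ∫⁻ θ in Metric.ball (0 : EuclideanSpace ℝ (Fin n)) 1, 1)
      (setLIntegral_mono measurable_const fun θ hθ => ?_) ?_)
    · have h1 := abs_real_inner_le_norm θ e
      rw [he, mul_one] at h1
      have h2 : ‖θ‖ < 1 := by simpa using hθ
      exact ENNReal.ofReal_le_one.2 (h1.trans h2.le)
    · simp [measure_ball_lt_top]
  · intro x
    have hx : ‖‖x‖ • e‖ = ‖x‖ := by simp [norm_smul, he]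
    set R := (ℝ ∙ (‖x‖ • e - x))ᗮ.reflection with hR
    have hRx : R (‖x‖ • e) = x := Submodule.reflection_sub hx
    have hmp := (R.measurePreserving).setLIntegral_comp_preimage
      (s := Metric.ball (0 : EuclideanSpace ℝ (Fin n)) 1) Metric.isOpen_ball.measurableSet (hm x)
    have hpre : R ⁻¹' (Metric.ball (0 : EuclideanSpace ℝ (Fin n)) 1) = Metric.ball 0 1 := by
      ext θ; simp
    rw [← hmp, hpre, ← lintegral_mul_const _ (hm e)]
    refine lintegral_congr fun θ => ?_
    have : inner ℝ (R θ) x = inner ℝ θ e * ‖x‖ := by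
      conv_lhs => rw [← hRx]
      rw [LinearIsometryEquiv.inner_map_map, inner_smul_right, mul_comm]
    rw [this, abs_mul, abs_norm, ENNReal.ofReal_mul (abs_nonneg _)]

lemma aux_rep (n : ℕ) : ∃ c : ℝ≥0∞, c ≠ 0 ∧ c ≠ ∞ ∧ ∀ x y : EuclideanSpace ℝ (Fin n),
    ∫⁻ s, .ofReal ((auxg s x - auxg s y) ^ 2) ∂(auxnu n) = c * .ofReal ‖x - y‖ := by
  obtain ⟨c, h0, h1, h⟩ := aux_lin n
  refine ⟨c, h0, h1, fun x y => ?_⟩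
  unfold auxnu
  rw [lintegral_prod _ ?_, ← h]
  · refine lintegral_congr fun θ => ?_
    simp only [auxg]
    rw [aux_1d, inner_sub_right]
  · have := auxg_meas measurable_id (measurable_const (a := x))
    have := auxg_meas measurable_id (measurable_const (a := y))
    simp only [id] at *
    exact Measurable.aemeasurable (by fun_prop)

lemma aux_kmeas {n : ℕ} {X Y : Type*} [MeasurableSpace X] [MeasurableSpace Y]
    {f : X → EuclideanSpace ℝ (Fin n) × ℝ} {U : Y → EuclideanSpace ℝ (Fin n)} {x y : X → Y}
    (hf : Measurable f) (hU : Measurable U) (hx : Measurable x) (hy : Measurable y) :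
    Measurable (fun t => ENNReal.ofReal ((auxg (f t) (U (x t)) - auxg (f t) (U (y t))) ^ 2)) :=
  ENNReal.measurable_ofReal.comp (Measurable.pow_const (Measurable.sub
    (auxg_meas hf (hU.comp hx)) (auxg_meas hf (hU.comp hy))) 2)

lemma aux_kmeas2 {p q : ℕ} {Ω X : Type*} [MeasurableSpace X] [MeasurableSpace Ω]
    {U : Ω → EuclideanSpace ℝ (Fin p)} {V : Ω → EuclideanSpace ℝ (Fin q)}
    (hU : Measurable U) (hV : Measurable V) (x y z w : X → Ω) (hx : Measurable x)
    (hy : Measurable y) (hz : Measurable z) (hw : Measurable w) :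
    Measurable (fun st : ((EuclideanSpace ℝ (Fin p) × ℝ) × (EuclideanSpace ℝ (Fin q) × ℝ)) × X =>
      ENNReal.ofReal ((auxg st.1.1 (U (x st.2)) - auxg st.1.1 (U (y st.2))) ^ 2) *
        ENNReal.ofReal ((auxg st.1.2 (V (z st.2)) - auxg st.1.2 (V (w st.2))) ^ 2)) :=
  Measurable.mul
    (aux_kmeas (measurable_fst.comp measurable_fst) hU (hx.comp measurable_snd)
      (hy.comp measurable_snd))
    (aux_kmeas (measurable_snd.comp measurable_fst) hV (hz.comp measurable_snd)
      (hw.comp measurable_snd))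

lemma aux_key {p q : ℕ} {Ω X : Type*} [MeasurableSpace X] [MeasurableSpace Ω]
    {U : Ω → EuclideanSpace ℝ (Fin p)} {V : Ω → EuclideanSpace ℝ (Fin q)}
    (hU : Measurable U) (hV : Measurable V) (c d : ℝ≥0∞) (c1 : c ≠ ∞) (d1 : d ≠ ∞)
    (hc : ∀ x y : EuclideanSpace ℝ (Fin p),
      ∫⁻ s, .ofReal ((auxg s x - auxg s y) ^ 2) ∂(auxnu p) = c * .ofReal ‖x - y‖)
    (hd : ∀ x y : EuclideanSpace ℝ (Fin q),
      ∫⁻ s, .ofReal ((auxg s x - auxg s y) ^ 2) ∂(auxnu q) = d * .ofReal ‖x - y‖)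
    (m : Measure X) [IsProbabilityMeasure m] (x y z w : X → Ω) (hx : Measurable x)
    (hy : Measurable y) (hz : Measurable z) (hw : Measurable w) :
      (c * d) * ∫⁻ t, .ofReal ‖U (x t) - U (y t)‖ * .ofReal ‖V (z t) - V (w t)‖ ∂m =
      ∫⁻ s, ∫⁻ t, .ofReal ((auxg s.1 (U (x t)) - auxg s.1 (U (y t))) ^ 2) *
        .ofReal ((auxg s.2 (V (z t)) - auxg s.2 (V (w t))) ^ 2) ∂m
          ∂((auxnu p).prod (auxnu q)) := by
  rw [lintegral_lintegral_swap (aux_kmeas2 hU hV x y z w hx hy hz hw).aemeasurable]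
  rw [← lintegral_const_mul' _ _ (ENNReal.mul_ne_top c1 d1)]
  refine lintegral_congr fun t => ?_
  rw [lintegral_prod_mul (f := fun s => ENNReal.ofReal ((auxg s (U (x t)) - auxg s (U (y t))) ^ 2))
        (g := fun s => ENNReal.ofReal ((auxg s (V (z t)) - auxg s (V (w t))) ^ 2))
    (aux_kmeas measurable_id hU measurable_const measurable_const).aemeasurable
    (aux_kmeas measurable_id hV measurable_const measurable_const).aemeasurable, hc, hd]
  ring

lemma aux_scale (c T1 T2 T3 T4 : ℝ≥0∞) (c0 : c ≠ 0) (c1 : c ≠ ∞)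
    (h : c * T3 + c * T4 ≤ c * T1 + c * T2) : T3 + T4 ≤ T1 + T2 := by
  rw [← mul_add, ← mul_add] at h
  exact (ENNReal.mul_le_mul_iff_right c0 c1).1 h

lemma aux_mono {S : Type*} [MeasurableSpace S] (ν : Measure S) (f1 f2 f3 f4 : S → ℝ≥0∞)
    (hf : Measurable f1) (h : ∀ s, f3 s + f4 s ≤ f1 s + f2 s) :
    ∫⁻ s, f3 s ∂ν + ∫⁻ s, f4 s ∂ν ≤ ∫⁻ s, f1 s ∂ν + ∫⁻ s, f2 s ∂ν := by
  rw [← lintegral_add_left hf]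
  exact (le_lintegral_add _ _).trans (lintegral_mono h)

lemma aux_conv {X1 X2 X3 X4 : Type*} [MeasurableSpace X1] [MeasurableSpace X2]
    [MeasurableSpace X3] [MeasurableSpace X4] (m1 : Measure X1) (m2 : Measure X2)
    (m3 : Measure X3) (m4 : Measure X4) (f1 g1 : X1 → ℝ) (f2 g2 : X2 → ℝ) (f3 g3 : X3 → ℝ)
    (f4 g4 : X4 → ℝ) (p1 : ∀ x, 0 ≤ f1 x) (p2 : ∀ x, 0 ≤ f2 x) (p3 : ∀ x, 0 ≤ f3 x)
    (p4 : ∀ x, 0 ≤ f4 x) (q1 : ∀ x, 0 ≤ g1 x) (q2 : ∀ x, 0 ≤ g2 x) (q3 : ∀ x, 0 ≤ g3 x)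
    (q4 : ∀ x, 0 ≤ g4 x)
    (h1 : Integrable (fun x => f1 x * g1 x) m1) (h2 : Integrable (fun x => f2 x * g2 x) m2)
    (h3 : AEStronglyMeasurable (fun x => f3 x * g3 x) m3)
    (h4 : AEStronglyMeasurable (fun x => f4 x * g4 x) m4)
    (H : ∫⁻ x, .ofReal (f3 x) * .ofReal (g3 x) ∂m3 + ∫⁻ x, .ofReal (f4 x) * .ofReal (g4 x) ∂m4 ≤
      ∫⁻ x, .ofReal (f1 x) * .ofReal (g1 x) ∂m1 + ∫⁻ x, .ofReal (f2 x) * .ofReal (g2 x) ∂m2) :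
    ∫ x, f3 x * g3 x ∂m3 + ∫ x, f4 x * g4 x ∂m4 ≤
      ∫ x, f1 x * g1 x ∂m1 + ∫ x, f2 x * g2 x ∂m2 := by
  simp_rw [← ENNReal.ofReal_mul (p1 _), ← ENNReal.ofReal_mul (p2 _), ← ENNReal.ofReal_mul (p3 _),
    ← ENNReal.ofReal_mul (p4 _)] at H
  have n1 : ∀ x, 0 ≤ f1 x * g1 x := fun x => mul_nonneg (p1 x) (q1 x)
  have n2 : ∀ x, 0 ≤ f2 x * g2 x := fun x => mul_nonneg (p2 x) (q2 x)
  have n3 : ∀ x, 0 ≤ f3 x * g3 x := fun x => mul_nonneg (p3 x) (q3 x)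
  have n4 : ∀ x, 0 ≤ f4 x * g4 x := fun x => mul_nonneg (p4 x) (q4 x)
  rw [← ofReal_integral_eq_lintegral_ofReal h1 (Filter.Eventually.of_forall n1),
    ← ofReal_integral_eq_lintegral_ofReal h2 (Filter.Eventually.of_forall n2),
    ← ENNReal.ofReal_add (integral_nonneg n1) (integral_nonneg n2)] at H
  have H3 := ENNReal.toReal_mono ENNReal.ofReal_ne_top H
  have HT := ne_top_of_le_ne_top ENNReal.ofReal_ne_top H
  rwa [ENNReal.toReal_add (ENNReal.add_ne_top.1 HT).1 (ENNReal.add_ne_top.1 HT).2,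
    ENNReal.toReal_ofReal (add_nonneg (integral_nonneg n1) (integral_nonneg n2)),
    ← integral_eq_lintegral_of_nonneg_ae (Filter.Eventually.of_forall n3) h3,
    ← integral_eq_lintegral_of_nonneg_ae (Filter.Eventually.of_forall n4) h4] at H3

lemma aux_main {Ω : Type*} [MeasurableSpace Ω] (μ : Measure Ω) [IsProbabilityMeasure μ]
    {p q : ℕ} (U : Ω → EuclideanSpace ℝ (Fin p)) (V : Ω → EuclideanSpace ℝ (Fin q))
    (hU : Measurable U) (hV : Measurable V) :
    (∫⁻ ω, .ofReal ‖U ω.1 - U ω.2.1‖ * .ofReal ‖V ω.1 - V ω.2.2‖ ∂(μ.prod (μ.prod μ))) +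
    (∫⁻ ω, .ofReal ‖U ω.1 - U ω.2.2‖ * .ofReal ‖V ω.1 - V ω.2.1‖ ∂(μ.prod (μ.prod μ))) ≤
    (∫⁻ ω, .ofReal ‖U ω.1 - U ω.2‖ * .ofReal ‖V ω.1 - V ω.2‖ ∂(μ.prod μ)) +
    (∫⁻ ω, .ofReal ‖U ω.1.1 - U ω.1.2‖ * .ofReal ‖V ω.2.1 - V ω.2.2‖
      ∂((μ.prod μ).prod (μ.prod μ))) := by
  obtain ⟨c, c0, c1, hc⟩ := aux_rep p
  obtain ⟨d, d0, d1, hd⟩ := aux_rep q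
  have key := fun {X : Type _} [MeasurableSpace X] (m : Measure X) [IsProbabilityMeasure m]
    (x y z w : X → Ω) => aux_key (X := X) hU hV c d c1 d1 hc hd m x y z w
  have k3 := key (μ.prod (μ.prod μ)) (fun ω => ω.1) (fun ω => ω.2.1) (fun ω => ω.1)
    (fun ω => ω.2.2) (by fun_prop) (by fun_prop) (by fun_prop) (by fun_prop)
  have k4 := key (μ.prod (μ.prod μ)) (fun ω => ω.1) (fun ω => ω.2.2) (fun ω => ω.1)
    (fun ω => ω.2.1) (by fun_prop) (by fun_prop) (by fun_prop) (by fun_prop)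
  have k1 := key (μ.prod μ) (fun ω => ω.1) (fun ω => ω.2) (fun ω => ω.1) (fun ω => ω.2)
      (by fun_prop) (by fun_prop) (by fun_prop) (by fun_prop)
  have k2 := key ((μ.prod μ).prod (μ.prod μ)) (fun ω => ω.1.1) (fun ω => ω.1.2) (fun ω => ω.2.1)
      (fun ω => ω.2.2) (by fun_prop) (by fun_prop) (by fun_prop) (by fun_prop)
  refine aux_scale (c * d) _ _ _ _ (mul_ne_zero c0 d0) (ENNReal.mul_ne_top c1 d1) ?_
  rw [k1, k2, k3, k4]
  refine aux_mono _ _ _ _ _ ?_ fun s => ?_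
  · exact (aux_kmeas2 hU hV (fun ω : Ω × Ω => ω.1) (fun ω => ω.2) (fun ω => ω.1) (fun ω => ω.2)
      measurable_fst measurable_snd measurable_fst measurable_snd).lintegral_prod_right'
  · exact aux_enn μ (fun ω => auxg s.1 (U ω)) (fun ω => auxg s.2 (V ω))
      (auxg_meas measurable_const hU) (auxg_meas measurable_const hV)
      (fun _ => auxg_bd _ _) (fun _ => auxg_bd _ _)

end helpers

/-- Nonnegativity of the squared distance covariance for random vectors with finite
first moments. -/
theorem dcov2_nonneg {Ω : Type*} [MeasurableSpace Ω] (μ : Measure Ω) [IsProbabilityMeasure μ]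
    {p q : ℕ} (U : Ω → EuclideanSpace ℝ (Fin p)) (V : Ω → EuclideanSpace ℝ (Fin q))
    (hU : Measurable U) (hV : Measurable V)
    (hUint : Integrable (fun ω => ‖U ω‖) μ) (hVint : Integrable (fun ω => ‖V ω‖) μ) :
    0 ≤ dcov2 μ U V := by
  have back : ∀ u v, Integrable (fun ω => ‖U ω - u‖ * ‖V ω - v‖) μ →
      Integrable (fun ω : Ω × Ω => ‖U ω.1 - U ω.2‖ * ‖V ω.1 - V ω.2‖) (μ.prod μ) := by
    intro u v h
    have hUV : Integrable (fun ω => ‖U ω‖ * ‖V ω‖) μ := by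
      refine Integrable.mono' (((h.add (hUint.const_mul ‖v‖)).add (hVint.const_mul ‖u‖)).add
        (integrable_const (3 * ‖u‖ * ‖v‖))) (by fun_prop) (Filter.Eventually.of_forall fun ω => ?_)
      have h1 : ‖U ω‖ ≤ ‖U ω - u‖ + ‖u‖ := by simpa using norm_add_le (U ω - u) u
      have h2 : ‖V ω‖ ≤ ‖V ω - v‖ + ‖v‖ := by simpa using norm_add_le (V ω - v) v
      have h3 : ‖U ω - u‖ ≤ ‖U ω‖ + ‖u‖ := norm_sub_le _ _
      have h4 : ‖V ω - v‖ ≤ ‖V ω‖ + ‖v‖ := norm_sub_le _ _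
      have h5 := mul_le_mul h1 h2 (norm_nonneg _) (by positivity)
      have h6 := mul_le_mul_of_nonneg_right h3 (norm_nonneg v)
      have h7 := mul_le_mul_of_nonneg_right h4 (norm_nonneg u)
      simp only [Pi.add_apply, norm_mul, norm_norm]
      nlinarith [mul_nonneg (norm_nonneg u) (norm_nonneg v)]
    have i1 : Integrable (fun ω : Ω × Ω => ‖U ω.1‖ * ‖V ω.1‖) (μ.prod μ) := hUV.comp_fst μ
    have i2 : Integrable (fun ω : Ω × Ω => ‖U ω.2‖ * ‖V ω.2‖) (μ.prod μ) := hUV.comp_snd μ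
    have i3 : Integrable (fun ω : Ω × Ω => ‖U ω.1‖ * ‖V ω.2‖) (μ.prod μ) := hUint.mul_prod hVint
    have i4 : Integrable (fun ω : Ω × Ω => ‖V ω.1‖ * ‖U ω.2‖) (μ.prod μ) := hVint.mul_prod hUint
    refine Integrable.mono' (((i1.add i2).add i3).add i4) (by fun_prop)
      (Filter.Eventually.of_forall fun ω => ?_)
    have h5 := mul_le_mul (norm_sub_le (U ω.1) (U ω.2)) (norm_sub_le (V ω.1) (V ω.2))
      (norm_nonneg _) (by positivity)
    simp only [Pi.add_apply, norm_mul, norm_norm]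
    nlinarith
  have hT2 : (∫ ω, ‖U ω.1 - U ω.2‖ ∂(μ.prod μ)) * (∫ ω, ‖V ω.1 - V ω.2‖ ∂(μ.prod μ)) =
      ∫ ω, ‖U ω.1.1 - U ω.1.2‖ * ‖V ω.2.1 - V ω.2.2‖ ∂((μ.prod μ).prod (μ.prod μ)) := by
    rw [← integral_prod_mul]
  have n2 : 0 ≤ ∫ ω, ‖U ω.1.1 - U ω.1.2‖ * ‖V ω.2.1 - V ω.2.2‖ ∂((μ.prod μ).prod (μ.prod μ)) :=
    integral_nonneg fun _ => by positivity
  unfold dcov2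
  rw [hT2]
  by_cases h1 : Integrable (fun ω : Ω × Ω => ‖U ω.1 - U ω.2‖ * ‖V ω.1 - V ω.2‖) (μ.prod μ)
  · have dU : Integrable (fun ω : Ω × Ω => ‖U ω.1 - U ω.2‖) (μ.prod μ) := by
      have hU' : Integrable U μ := (integrable_norm_iff (by fun_prop)).1 hUint
      exact ((hU'.comp_fst μ).sub (hU'.comp_snd μ)).norm
    have dV : Integrable (fun ω : Ω × Ω => ‖V ω.1 - V ω.2‖) (μ.prod μ) := by
      have hV' : Integrable V μ := (integrable_norm_iff (by fun_prop)).1 hVint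
      exact ((hV'.comp_fst μ).sub (hV'.comp_snd μ)).norm
    have h2 : Integrable (fun ω : (Ω × Ω) × (Ω × Ω) => ‖U ω.1.1 - U ω.1.2‖ * ‖V ω.2.1 - V ω.2.2‖)
      ((μ.prod μ).prod (μ.prod μ)) :=
      Integrable.mul_prod (f := fun ω : Ω × Ω => ‖U ω.1 - U ω.2‖)
        (g := fun ω : Ω × Ω => ‖V ω.1 - V ω.2‖) dU dV
    have H := aux_main μ U V hU hV
    have H3 := aux_conv (μ.prod μ) ((μ.prod μ).prod (μ.prod μ)) (μ.prod (μ.prod μ))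
      (μ.prod (μ.prod μ)) (fun ω => ‖U ω.1 - U ω.2‖) (fun ω => ‖V ω.1 - V ω.2‖)
      (fun ω => ‖U ω.1.1 - U ω.1.2‖) (fun ω => ‖V ω.2.1 - V ω.2.2‖)
      (fun ω => ‖U ω.1 - U ω.2.1‖) (fun ω => ‖V ω.1 - V ω.2.2‖)
      (fun ω => ‖U ω.1 - U ω.2.2‖) (fun ω => ‖V ω.1 - V ω.2.1‖) (fun _ => norm_nonneg _) (fun _ => norm_nonneg _)
      (fun _ => norm_nonneg _) (fun _ => norm_nonneg _) (fun _ => norm_nonneg _)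
      (fun _ => norm_nonneg _) (fun _ => norm_nonneg _) (fun _ => norm_nonneg _) h1 h2
      (by fun_prop) (by fun_prop) H
    linarith
  · have h3 : ¬ Integrable (fun ω : Ω × Ω × Ω => ‖U ω.1 - U ω.2.1‖ * ‖V ω.1 - V ω.2.2‖)
        (μ.prod (μ.prod μ)) := by
      intro h
      obtain ⟨w, hw⟩ := h.prod_left_ae.exists
      exact h1 (back (U w.1) (V w.2) hw)
    have h4 : ¬ Integrable (fun ω : Ω × Ω × Ω => ‖U ω.1 - U ω.2.2‖ * ‖V ω.1 - V ω.2.1‖)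
        (μ.prod (μ.prod μ)) := by
      intro h
      obtain ⟨w, hw⟩ := h.prod_left_ae.exists
      exact h1 (back (U w.2) (V w.1) hw)
    rw [integral_undef h1, integral_undef h3, integral_undef h4]
    linarith
end

section
/- For random vectors U ∈ ℝ^p and V ∈ ℝ^q with finite first moments, the distance covariance V(U,V) = 0 if and only if U and V are independent. -/
open MeasureTheory ProbabilityTheory

lemma aux_integrable_h {p : ℕ} (hp : p ≠ 0) :
    Integrable (fun s : EuclideanSpace ℝ (Fin p) => (‖s‖ ^ (p+1))⁻¹ * min 1 (‖s‖^2)) volume := by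
  have : Nonempty (Fin p) := ⟨⟨0, Nat.pos_of_ne_zero hp⟩⟩
  have := (integrable_fun_norm_addHaar (volume : Measure (EuclideanSpace ℝ (Fin p)))
    (f := fun r : ℝ => (r ^ (p+1))⁻¹ * min 1 (r^2)))
  rw [this]
  have h1 : ∀ y ∈ Set.Ioi (0:ℝ), min 1 ((y^2)⁻¹) =
     y ^ (Module.finrank ℝ (EuclideanSpace ℝ (Fin p)) - 1) • ((y ^ (p+1))⁻¹ * min 1 (y^2)) := by
    intro y hy
    have hy : 0 < y := hy
    obtain ⟨k, rfl⟩ := Nat.exists_eq_succ_of_ne_zero hp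
    have : y ^ k * ((y ^ (k+1+1))⁻¹ * min 1 (y^2)) = (y^2)⁻¹ * min 1 (y^2) := by
      field_simp
      ring
    simp only [finrank_euclideanSpace, Fintype.card_fin, Nat.succ_eq_add_one, Nat.add_sub_cancel, smul_eq_mul]
    rw [this, mul_min_of_nonneg _ _ (by positivity), mul_one, inv_mul_cancel₀ (by positivity), min_comm]
  refine IntegrableOn.congr_fun ?_ h1 measurableSet_Ioi
  rw [← Set.Ioc_union_Ioi_eq_Ioi (zero_le_one' ℝ)]
  have hm : Measurable (fun y : ℝ => min 1 ((y^2)⁻¹)) := by fun_prop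
  refine IntegrableOn.union ?_ ?_
  · refine Integrable.mono' (g := fun _ => (1:ℝ)) (by simp) hm.aestronglyMeasurable ?_
    refine Filter.Eventually.of_forall fun y => ?_
    rw [Real.norm_of_nonneg (by positivity)]
    exact min_le_left _ _
  · refine Integrable.mono' (integrableOn_Ioi_rpow_of_lt (a := -2) (by norm_num) one_pos) hm.aestronglyMeasurable ?_
    refine (ae_restrict_mem measurableSet_Ioi).mono fun y hy => ?_
    have hy : 1 < y := hy
    rw [Real.norm_of_nonneg (by positivity), Real.rpow_neg (by linarith)]
    norm_cast
    exact min_le_right _ _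

lemma aux_integrable_g {p : ℕ} (hp : p ≠ 0) (x : EuclideanSpace ℝ (Fin p)) :
    Integrable (fun s : EuclideanSpace ℝ (Fin p) =>
      (‖s‖ ^ (p+1))⁻¹ * (1 - Real.cos (inner ℝ s x))) volume := by
  refine ((aux_integrable_h hp).const_mul (2 + ‖x‖^2)).mono' (by fun_prop) ?_
  refine Filter.Eventually.of_forall fun s => ?_
  have h0 : 0 ≤ 1 - Real.cos (inner ℝ s x) := by linarith [Real.cos_le_one (inner ℝ s x)]
  rw [Real.norm_of_nonneg (by positivity), mul_left_comm]
  gcongr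
  have h1 : (inner ℝ s x)^2 ≤ (‖s‖ * ‖x‖)^2 := by
    rw [← sq_abs]
    gcongr
    exact abs_real_inner_le_norm s x
  rcases min_cases (1:ℝ) (‖s‖^2) with ⟨h, _⟩ | ⟨h, _⟩ <;> rw [h]
  · nlinarith [Real.neg_one_le_cos (inner ℝ s x), sq_nonneg ‖x‖]
  · nlinarith [Real.one_sub_sq_div_two_le_cos (x := inner ℝ s x), sq_nonneg ‖s‖, sq_nonneg (‖s‖*‖x‖)]

lemma norm_repr (p : ℕ) : ∃ (m : Measure (EuclideanSpace ℝ (Fin p))) (c : ℝ),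
    SFinite m ∧ m.IsOpenPosMeasure ∧ 0 < c ∧ ∀ x : EuclideanSpace ℝ (Fin p),
      Integrable (fun s => 1 - Real.cos (inner ℝ s x)) m ∧
      ∫ s, (1 - Real.cos (inner ℝ s x)) ∂m = c * ‖x‖ := by
  rcases eq_or_ne p 0 with rfl | hp
  · refine ⟨volume, 1, inferInstance, inferInstance, one_pos, fun x => ?_⟩
    have : x = 0 := Subsingleton.elim _ _
    subst this
    simp
  have : Nonempty (Fin p) := ⟨⟨0, Nat.pos_of_ne_zero hp⟩⟩
  let w : EuclideanSpace ℝ (Fin p) → NNReal := fun s => (‖s‖₊ ^ (p+1))⁻¹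
  have hw : Measurable w := by fun_prop
  let m : Measure (EuclideanSpace ℝ (Fin p)) := volume.withDensity (fun s => (w s : ENNReal))
  have hop : m.IsOpenPosMeasure := by
    refine Measure.AbsolutelyContinuous.isOpenPosMeasure (μ := volume) ?_
    refine withDensity_absolutelyContinuous' (by fun_prop) ?_
    have : ∀ᵐ s : EuclideanSpace ℝ (Fin p), s ≠ 0 := Measure.ae_ne volume 0
    filter_upwards [this] with s hs
    simp [w, hs]
  let J : EuclideanSpace ℝ (Fin p) → ℝ := fun x => ∫ s, (‖s‖ ^ (p+1))⁻¹ * (1 - Real.cos (inner ℝ s x))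
  have hint : ∀ x, Integrable (fun s => 1 - Real.cos (inner ℝ s x)) m := by
    intro x
    rw [integrable_withDensity_iff_integrable_coe_smul hw]
    simpa [w] using aux_integrable_g hp x
  have hJ : ∀ x, ∫ s, (1 - Real.cos (inner ℝ s x)) ∂m = J x := by
    intro x
    rw [integral_withDensity_eq_integral_smul hw]
    simp [w, J, NNReal.smul_def]
  have hrot : ∀ x y, ‖x‖ = ‖y‖ → J x = J y := by
    intro x y h
    let R := Submodule.reflection (Submodule.span ℝ {x - y})ᗮ
    have hR : R x = y := Submodule.reflection_sub h
    have := (R.measurePreserving).integral_comp' (f := R.toMeasurableEquiv) (fun s => (‖s‖ ^ (p+1))⁻¹ * (1 - Real.cos (inner ℝ s y)))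
    rw [← hR] at this ⊢
    simp only [J]
    rw [← this]
    simp
  have hsc : ∀ (r : ℝ) x, 0 < r → J (r • x) = r * J x := by
    intro r x hr
    have := Measure.integral_comp_smul volume (fun s : EuclideanSpace ℝ (Fin p) => (‖s‖ ^ (p+1))⁻¹ * (1 - Real.cos (inner ℝ s x))) r
    simp only [norm_smul, Real.norm_eq_abs, abs_of_pos hr, real_inner_smul_left, mul_pow, mul_inv, mul_assoc, finrank_euclideanSpace, Fintype.card_fin, smul_eq_mul] at this
    rw [integral_const_mul, abs_of_pos (by positivity)] at this
    simp only [J, real_inner_smul_right]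
    field_simp at this
    rw [pow_succ] at this
    have h2 := pow_pos hr p
    simp only [inv_mul_eq_div]
    apply mul_right_cancel₀ h2.ne'
    linarith
  let e : EuclideanSpace ℝ (Fin p) := EuclideanSpace.single ⟨0, Nat.pos_of_ne_zero hp⟩ 1
  have he : ‖e‖ = 1 := by simp [e]
  refine ⟨m, J e, ?_, hop, ?_, fun x => ⟨hint x, ?_⟩⟩
  · infer_instance
  · rw [← hJ]
    have h0 : 0 ≤ fun s : EuclideanSpace ℝ (Fin p) => 1 - Real.cos (inner ℝ s e) := fun s => by
      simpa using Real.cos_le_one (inner ℝ s e)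
    refine lt_of_le_of_ne (integral_nonneg h0) fun h => ?_
    rw [eq_comm, integral_eq_zero_iff_of_nonneg h0 (hint e)] at h
    have := (Continuous.ae_eq_iff_eq m (by fun_prop) (by fun_prop)).1 h
    have := congrFun this (Real.pi • e)
    simp [real_inner_smul_left, he] at this
  · rw [hJ]
    rcases eq_or_ne x 0 with rfl | hx
    · simp [J]
    have hx' := norm_pos_iff.2 hx
    rw [hrot x (‖x‖ • e) (by simp [norm_smul, he]), hsc _ _ hx', mul_comm]

lemma fubini_term {Ω' E F : Type*} [MeasurableSpace Ω'] (P : Measure Ω') [SFinite P]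
    [NormedAddCommGroup E] [InnerProductSpace ℝ E] [MeasurableSpace E] [BorelSpace E]
    [SecondCountableTopology E]
    [NormedAddCommGroup F] [InnerProductSpace ℝ F] [MeasurableSpace F] [BorelSpace F]
    [SecondCountableTopology F]
    (m : Measure E) (m' : Measure F) [SFinite m] [SFinite m'] (c c' : ℝ)
    (hm : ∀ x : E, Integrable (fun s => 1 - Real.cos (inner ℝ s x)) m ∧
      ∫ s, (1 - Real.cos (inner ℝ s x)) ∂m = c * ‖x‖)
    (hm' : ∀ x : F, Integrable (fun s => 1 - Real.cos (inner ℝ s x)) m' ∧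
      ∫ s, (1 - Real.cos (inner ℝ s x)) ∂m' = c' * ‖x‖)
    (X : Ω' → E) (Y : Ω' → F) (hX : Measurable X) (hY : Measurable Y)
    (hXY : Integrable (fun ω => ‖X ω‖ * ‖Y ω‖) P) :
    Integrable (fun z : E × F => ∫ ω, (1 - Real.cos (inner ℝ z.1 (X ω))) *
      (1 - Real.cos (inner ℝ z.2 (Y ω))) ∂P) (m.prod m') ∧
    ∫ z : E × F, (∫ ω, (1 - Real.cos (inner ℝ z.1 (X ω))) *
      (1 - Real.cos (inner ℝ z.2 (Y ω))) ∂P) ∂(m.prod m') = c * c' * ∫ ω, ‖X ω‖ * ‖Y ω‖ ∂P := by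
  let f : Ω' → E × F → ℝ := fun ω z => (1 - Real.cos (inner ℝ z.1 (X ω))) *
      (1 - Real.cos (inner ℝ z.2 (Y ω)))
  have hf0 : ∀ ω z, 0 ≤ f ω z := fun ω z => mul_nonneg
    (by linarith [Real.cos_le_one (inner ℝ z.1 (X ω))])
    (by linarith [Real.cos_le_one (inner ℝ z.2 (Y ω))])
  have hfm : Measurable (Function.uncurry f) := by
    unfold f Function.uncurry
    fun_prop
  have hval : ∀ ω, ∫ z, f ω z ∂(m.prod m') = c * c' * (‖X ω‖ * ‖Y ω‖) := by
    intro ω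
    have := integral_prod_mul (μ := m) (ν := m') (fun s => 1 - Real.cos (inner ℝ s (X ω)))
      (fun s => 1 - Real.cos (inner ℝ s (Y ω)))
    rw [(hm _).2, (hm' _).2] at this
    rw [this]; ring
  have hfi : Integrable (Function.uncurry f) (P.prod (m.prod m')) := by
    rw [integrable_prod_iff hfm.aestronglyMeasurable]
    refine ⟨Filter.Eventually.of_forall fun ω => (hm (X ω)).1.mul_prod (hm' (Y ω)).1, ?_⟩
    have : (fun ω => ∫ z, ‖Function.uncurry f (ω, z)‖ ∂(m.prod m')) =
        fun ω => c * c' * (‖X ω‖ * ‖Y ω‖) := by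
      ext ω
      rw [← hval]
      congr 1
      ext z
      exact Real.norm_of_nonneg (hf0 ω z)
    rw [this]
    exact hXY.const_mul _
  refine ⟨hfi.integral_prod_right, ?_⟩
  rw [← integral_integral_swap hfi, ← integral_const_mul]
  simp_rw [hval]

/-- integrable with given integral -/
def HI {Ω' G : Type*} [MeasurableSpace Ω'] [NormedAddCommGroup G] [NormedSpace ℝ G]
    (P : Measure Ω') (f : Ω' → G) (v : G) : Prop := Integrable f P ∧ ∫ ω, f ω ∂P = v

section HIs
variable {Ω Ω' G : Type*} [MeasurableSpace Ω] [MeasurableSpace Ω'] [NormedAddCommGroup G]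
  [NormedSpace ℝ G]

lemma HI.add {P : Measure Ω} {f g : Ω → G} {v w : G} (hf : HI P f v) (hg : HI P g w) :
    HI P (fun ω => f ω + g ω) (v + w) :=
  ⟨hf.1.add hg.1, by rw [integral_add hf.1 hg.1, hf.2, hg.2]⟩

lemma HI.sub {P : Measure Ω} {f g : Ω → G} {v w : G} (hf : HI P f v) (hg : HI P g w) :
    HI P (fun ω => f ω - g ω) (v - w) :=
  ⟨hf.1.sub hg.1, by rw [integral_sub hf.1 hg.1, hf.2, hg.2]⟩

lemma HI.prod {P : Measure Ω} {Q : Measure Ω'} [SFinite P] [SFinite Q] {f : Ω → ℝ} {g : Ω' → ℝ}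
    {v w : ℝ} (hf : HI P f v) (hg : HI Q g w) :
    HI (P.prod Q) (fun ω => f ω.1 * g ω.2) (v * w) :=
  ⟨hf.1.mul_prod hg.1, by rw [integral_prod_mul, hf.2, hg.2]⟩

lemma HI.ofBdd {P : Measure Ω} [IsProbabilityMeasure P] {f : Ω → ℝ} (hf : Measurable f)
    (h : ∀ ω, |f ω| ≤ 1) : HI P f (∫ ω, f ω ∂P) :=
  ⟨(integrable_const (1:ℝ)).mono' hf.aestronglyMeasurable (Filter.Eventually.of_forall h), rfl⟩

lemma HI.one {P : Measure Ω} [IsProbabilityMeasure P] : HI P (fun _ => (1:ℝ)) 1 :=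
  ⟨integrable_const _, by simp⟩

lemma D_identity (μ : Measure Ω) [IsProbabilityMeasure μ] (a b c d : Ω → ℝ)
    (ha : Measurable a) (hb : Measurable b) (hc : Measurable c) (hd : Measurable d)
    (ha' : ∀ ω, |a ω| ≤ 1) (hb' : ∀ ω, |b ω| ≤ 1) (hc' : ∀ ω, |c ω| ≤ 1) (hd' : ∀ ω, |d ω| ≤ 1) :
    (∫ ω, (1 - (a ω.1 * a ω.2 + b ω.1 * b ω.2)) * (1 - (c ω.1 * c ω.2 + d ω.1 * d ω.2))
      ∂(μ.prod μ))
    + (∫ ω, (1 - (a ω.1.1 * a ω.1.2 + b ω.1.1 * b ω.1.2)) *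
        (1 - (c ω.2.1 * c ω.2.2 + d ω.2.1 * d ω.2.2)) ∂((μ.prod μ).prod (μ.prod μ)))
    - (∫ ω, (1 - (a ω.1 * a ω.2.1 + b ω.1 * b ω.2.1)) * (1 - (c ω.1 * c ω.2.2 + d ω.1 * d ω.2.2))
      ∂(μ.prod (μ.prod μ)))
    - (∫ ω, (1 - (a ω.1 * a ω.2.2 + b ω.1 * b ω.2.2)) * (1 - (c ω.1 * c ω.2.1 + d ω.1 * d ω.2.1))
      ∂(μ.prod (μ.prod μ)))
    = ((∫ ω, a ω * c ω ∂μ) - (∫ ω, a ω ∂μ) * ∫ ω, c ω ∂μ) ^ 2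
    + ((∫ ω, a ω * d ω ∂μ) - (∫ ω, a ω ∂μ) * ∫ ω, d ω ∂μ) ^ 2
    + ((∫ ω, b ω * c ω ∂μ) - (∫ ω, b ω ∂μ) * ∫ ω, c ω ∂μ) ^ 2
    + ((∫ ω, b ω * d ω ∂μ) - (∫ ω, b ω ∂μ) * ∫ ω, d ω ∂μ) ^ 2 := by
  have mulb : ∀ {f g : Ω → ℝ}, (∀ ω, |f ω| ≤ 1) → (∀ ω, |g ω| ≤ 1) → ∀ ω, |f ω * g ω| ≤ 1 := by
    intro f g hf hg ω
    rw [abs_mul]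
    exact mul_le_one₀ (hf ω) (abs_nonneg _) (hg ω)
  have Ha := HI.ofBdd (P := μ) ha ha'
  have Hb := HI.ofBdd (P := μ) hb hb'
  have Hc := HI.ofBdd (P := μ) hc hc'
  have Hd := HI.ofBdd (P := μ) hd hd'
  have Hac := HI.ofBdd (P := μ) (ha.mul hc) (mulb ha' hc')
  have Had := HI.ofBdd (P := μ) (ha.mul hd) (mulb ha' hd')
  have Hbc := HI.ofBdd (P := μ) (hb.mul hc) (mulb hb' hc')
  have Hbd := HI.ofBdd (P := μ) (hb.mul hd) (mulb hb' hd')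
  have H1 := HI.one (P := μ)
  have H11 := HI.one (P := μ.prod μ)
  have T1 := (((HI.one (P := μ.prod μ)).sub ((Ha.prod Ha).add (Hb.prod Hb))).sub
    ((Hc.prod Hc).add (Hd.prod Hd))).add
    (((Hac.prod Hac).add (Had.prod Had)).add ((Hbc.prod Hbc).add (Hbd.prod Hbd)))
  have T2 := (H11.sub ((Ha.prod Ha).add (Hb.prod Hb))).prod
    (H11.sub ((Hc.prod Hc).add (Hd.prod Hd)))
  have T3 := (((HI.one (P := μ.prod (μ.prod μ))).sub
    ((Ha.prod (Ha.prod H1)).add (Hb.prod (Hb.prod H1)))).sub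
    ((Hc.prod (H1.prod Hc)).add (Hd.prod (H1.prod Hd)))).add
    (((Hac.prod (Ha.prod Hc)).add (Had.prod (Ha.prod Hd))).add
      ((Hbc.prod (Hb.prod Hc)).add (Hbd.prod (Hb.prod Hd))))
  have T4 := (((HI.one (P := μ.prod (μ.prod μ))).sub
    ((Ha.prod (H1.prod Ha)).add (Hb.prod (H1.prod Hb)))).sub
    ((Hc.prod (Hc.prod H1)).add (Hd.prod (Hd.prod H1)))).add
    (((Hac.prod (Hc.prod Ha)).add (Had.prod (Hd.prod Ha))).add
      ((Hbc.prod (Hc.prod Hb)).add (Hbd.prod (Hd.prod Hb))))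
  rw [T2.2]
  have E1 := T1.2
  have E3 := T3.2
  have E4 := T4.2
  rw [integral_congr_ae (Filter.Eventually.of_forall fun ω => ?_)] at E1
  rw [integral_congr_ae (Filter.Eventually.of_forall fun ω => ?_)] at E3
  rw [integral_congr_ae (Filter.Eventually.of_forall fun ω => ?_)] at E4
  rw [E1, E3, E4]
  · simp only [Pi.mul_apply]
    ring
  · simp only [Pi.mul_apply]; ring
  · simp only [Pi.mul_apply]; ring
  · simp only [Pi.mul_apply]; ring

lemma charFun_re_im {E : Type*} [NormedAddCommGroup E] [InnerProductSpace ℝ E] [MeasurableSpace E]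
    [BorelSpace E] [SecondCountableTopology E] (μ : Measure Ω) [IsProbabilityMeasure μ] (U : Ω → E) (hU : Measurable U) (s : E) :
    charFun (μ.map U) s = ((∫ ω, Real.cos (inner ℝ s (U ω)) ∂μ : ℝ) : ℂ) +
      ((∫ ω, Real.sin (inner ℝ s (U ω)) ∂μ : ℝ) : ℂ) * Complex.I := by
  have h1 := HI.ofBdd (P := μ) (f := fun ω => Real.cos (inner ℝ s (U ω))) (by fun_prop)
    (fun ω => Real.abs_cos_le_one _)
  have h2 := HI.ofBdd (P := μ) (f := fun ω => Real.sin (inner ℝ s (U ω))) (by fun_prop)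
    (fun ω => Real.abs_sin_le_one _)
  rw [charFun_apply, integral_map hU.aemeasurable (by fun_prop), ← integral_complex_ofReal,
    ← integral_complex_ofReal, ← integral_mul_const, ← integral_add h1.1.ofReal (h2.1.ofReal.mul_const _)]
  congr 1
  ext ω
  rw [real_inner_comm, Complex.exp_mul_I]
  simp

lemma indep_of_cov (μ : Measure Ω) [IsProbabilityMeasure μ]
    {p q : ℕ} (U : Ω → EuclideanSpace ℝ (Fin p)) (V : Ω → EuclideanSpace ℝ (Fin q))
    (hU : Measurable U) (hV : Measurable V)
    (h : ∀ z : EuclideanSpace ℝ (Fin p) × EuclideanSpace ℝ (Fin q),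
     ((∫ ω, Real.cos (inner ℝ z.1 (U ω)) * Real.cos (inner ℝ z.2 (V ω)) ∂μ) -
        (∫ ω, Real.cos (inner ℝ z.1 (U ω)) ∂μ) * ∫ ω, Real.cos (inner ℝ z.2 (V ω)) ∂μ) ^ 2
    + ((∫ ω, Real.cos (inner ℝ z.1 (U ω)) * Real.sin (inner ℝ z.2 (V ω)) ∂μ) -
        (∫ ω, Real.cos (inner ℝ z.1 (U ω)) ∂μ) * ∫ ω, Real.sin (inner ℝ z.2 (V ω)) ∂μ) ^ 2
    + ((∫ ω, Real.sin (inner ℝ z.1 (U ω)) * Real.cos (inner ℝ z.2 (V ω)) ∂μ) -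
        (∫ ω, Real.sin (inner ℝ z.1 (U ω)) ∂μ) * ∫ ω, Real.cos (inner ℝ z.2 (V ω)) ∂μ) ^ 2
    + ((∫ ω, Real.sin (inner ℝ z.1 (U ω)) * Real.sin (inner ℝ z.2 (V ω)) ∂μ) -
        (∫ ω, Real.sin (inner ℝ z.1 (U ω)) ∂μ) * ∫ ω, Real.sin (inner ℝ z.2 (V ω)) ∂μ) ^ 2 = 0) :
    IndepFun U V μ := by
  rw [indepFun_iff_charFun_prod hU.aemeasurable hV.aemeasurable]
  intro t
  have mulb : ∀ {x y : ℝ}, |x| ≤ 1 → |y| ≤ 1 → |x * y| ≤ 1 := by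
    intro x y hf hg
    rw [abs_mul]
    exact mul_le_one₀ hf (abs_nonneg _) hg
  have hz := h (t.ofLp.1, t.ofLp.2)
  rw [charFun_re_im μ _ (by fun_prop), charFun_re_im μ U hU, charFun_re_im μ V hV]
  simp only [WithLp.prod_inner_apply, Real.cos_add, Real.sin_add]
  simp only at hz
  have Hcc := HI.ofBdd (P := μ) (f := fun ω => Real.cos (inner ℝ t.ofLp.1 (U ω)) * Real.cos (inner ℝ t.ofLp.2 (V ω)))
    (by fun_prop) (fun ω => mulb (Real.abs_cos_le_one _) (Real.abs_cos_le_one _))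
  have Hcs := HI.ofBdd (P := μ) (f := fun ω => Real.cos (inner ℝ t.ofLp.1 (U ω)) * Real.sin (inner ℝ t.ofLp.2 (V ω)))
    (by fun_prop) (fun ω => mulb (Real.abs_cos_le_one _) (Real.abs_sin_le_one _))
  have Hsc := HI.ofBdd (P := μ) (f := fun ω => Real.sin (inner ℝ t.ofLp.1 (U ω)) * Real.cos (inner ℝ t.ofLp.2 (V ω)))
    (by fun_prop) (fun ω => mulb (Real.abs_sin_le_one _) (Real.abs_cos_le_one _))
  have Hss := HI.ofBdd (P := μ) (f := fun ω => Real.sin (inner ℝ t.ofLp.1 (U ω)) * Real.sin (inner ℝ t.ofLp.2 (V ω)))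
    (by fun_prop) (fun ω => mulb (Real.abs_sin_le_one _) (Real.abs_sin_le_one _))
  rw [(Hcc.sub Hss).2, (Hsc.add Hcs).2]
  generalize (∫ ω, Real.cos (inner ℝ t.ofLp.1 (U ω)) * Real.cos (inner ℝ t.ofLp.2 (V ω)) ∂μ) = cc at *
  generalize (∫ ω, Real.cos (inner ℝ t.ofLp.1 (U ω)) * Real.sin (inner ℝ t.ofLp.2 (V ω)) ∂μ) = cs at *
  generalize (∫ ω, Real.sin (inner ℝ t.ofLp.1 (U ω)) * Real.cos (inner ℝ t.ofLp.2 (V ω)) ∂μ) = sc at *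
  generalize (∫ ω, Real.sin (inner ℝ t.ofLp.1 (U ω)) * Real.sin (inner ℝ t.ofLp.2 (V ω)) ∂μ) = ss at *
  generalize (∫ ω, Real.cos (inner ℝ t.ofLp.1 (U ω)) ∂μ) = c1 at *
  generalize (∫ ω, Real.sin (inner ℝ t.ofLp.1 (U ω)) ∂μ) = s1 at *
  generalize (∫ ω, Real.cos (inner ℝ t.ofLp.2 (V ω)) ∂μ) = c2 at *
  generalize (∫ ω, Real.sin (inner ℝ t.ofLp.2 (V ω)) ∂μ) = s2 at *
  have e1 : cc = c1 * c2 := by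
    rw [← sub_eq_zero]; exact pow_eq_zero_iff two_ne_zero |>.1 (by nlinarith [sq_nonneg (cc - c1*c2), sq_nonneg (cs - c1*s2), sq_nonneg (sc - s1*c2), sq_nonneg (ss - s1*s2)])
  have e2 : cs = c1 * s2 := by
    rw [← sub_eq_zero]; exact pow_eq_zero_iff two_ne_zero |>.1 (by nlinarith [sq_nonneg (cc - c1*c2), sq_nonneg (cs - c1*s2), sq_nonneg (sc - s1*c2), sq_nonneg (ss - s1*s2)])
  have e3 : sc = s1 * c2 := by
    rw [← sub_eq_zero]; exact pow_eq_zero_iff two_ne_zero |>.1 (by nlinarith [sq_nonneg (cc - c1*c2), sq_nonneg (cs - c1*s2), sq_nonneg (sc - s1*c2), sq_nonneg (ss - s1*s2)])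
  have e4 : ss = s1 * s2 := by
    rw [← sub_eq_zero]; exact pow_eq_zero_iff two_ne_zero |>.1 (by nlinarith [sq_nonneg (cc - c1*c2), sq_nonneg (cs - c1*s2), sq_nonneg (sc - s1*c2), sq_nonneg (ss - s1*s2)])
  subst e1 e2 e3 e4
  push_cast
  linear_combination (-(s1:ℂ) * s2) * Complex.I_sq

end HIs

/-- sum of squared covariances of the trigonometric functions -/
noncomputable def covS {Ω E F : Type*} [MeasurableSpace Ω]
    [NormedAddCommGroup E] [InnerProductSpace ℝ E] [NormedAddCommGroup F] [InnerProductSpace ℝ F]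
    (μ : Measure Ω) (U : Ω → E) (V : Ω → F) (z : E × F) : ℝ :=
     ((∫ ω, Real.cos (inner ℝ z.1 (U ω)) * Real.cos (inner ℝ z.2 (V ω)) ∂μ) -
        (∫ ω, Real.cos (inner ℝ z.1 (U ω)) ∂μ) * ∫ ω, Real.cos (inner ℝ z.2 (V ω)) ∂μ) ^ 2
    + ((∫ ω, Real.cos (inner ℝ z.1 (U ω)) * Real.sin (inner ℝ z.2 (V ω)) ∂μ) -
        (∫ ω, Real.cos (inner ℝ z.1 (U ω)) ∂μ) * ∫ ω, Real.sin (inner ℝ z.2 (V ω)) ∂μ) ^ 2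
    + ((∫ ω, Real.sin (inner ℝ z.1 (U ω)) * Real.cos (inner ℝ z.2 (V ω)) ∂μ) -
        (∫ ω, Real.sin (inner ℝ z.1 (U ω)) ∂μ) * ∫ ω, Real.cos (inner ℝ z.2 (V ω)) ∂μ) ^ 2
    + ((∫ ω, Real.sin (inner ℝ z.1 (U ω)) * Real.sin (inner ℝ z.2 (V ω)) ∂μ) -
        (∫ ω, Real.sin (inner ℝ z.1 (U ω)) ∂μ) * ∫ ω, Real.sin (inner ℝ z.2 (V ω)) ∂μ) ^ 2

section final
variable {Ω : Type*} [MeasurableSpace Ω] (μ : Measure Ω) [IsProbabilityMeasure μ]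
    {p q : ℕ} (U : Ω → EuclideanSpace ℝ (Fin p)) (V : Ω → EuclideanSpace ℝ (Fin q))

lemma covS_continuous (hU : Measurable U) (hV : Measurable V) : Continuous (covS μ U V) := by
  have key : ∀ f : EuclideanSpace ℝ (Fin p) × EuclideanSpace ℝ (Fin q) → Ω → ℝ,
      (∀ z, Measurable (f z)) → (∀ ω, Continuous (fun z => f z ω)) → (∀ z ω, |f z ω| ≤ 1) →
      Continuous (fun z => ∫ ω, f z ω ∂μ) := by
    intro f h1 h2 h3
    exact continuous_of_dominated (bound := fun _ => 1) (fun z => (h1 z).aestronglyMeasurable)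
      (fun z => Filter.Eventually.of_forall (h3 z)) (integrable_const _)
      (Filter.Eventually.of_forall h2)
  have mulb : ∀ {x y : ℝ}, |x| ≤ 1 → |y| ≤ 1 → |x * y| ≤ 1 := by
    intro x y hf hg
    rw [abs_mul]
    exact mul_le_one₀ hf (abs_nonneg _) hg
  have k1 := key (fun z ω => Real.cos (inner ℝ z.1 (U ω)) * Real.cos (inner ℝ z.2 (V ω)))
    (fun z => by fun_prop) (fun ω => by fun_prop)
    (fun z ω => mulb (Real.abs_cos_le_one _) (Real.abs_cos_le_one _))
  have k2 := key (fun z ω => Real.cos (inner ℝ z.1 (U ω)) * Real.sin (inner ℝ z.2 (V ω)))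
    (fun z => by fun_prop) (fun ω => by fun_prop)
    (fun z ω => mulb (Real.abs_cos_le_one _) (Real.abs_sin_le_one _))
  have k3 := key (fun z ω => Real.sin (inner ℝ z.1 (U ω)) * Real.cos (inner ℝ z.2 (V ω)))
    (fun z => by fun_prop) (fun ω => by fun_prop)
    (fun z ω => mulb (Real.abs_sin_le_one _) (Real.abs_cos_le_one _))
  have k4 := key (fun z ω => Real.sin (inner ℝ z.1 (U ω)) * Real.sin (inner ℝ z.2 (V ω)))
    (fun z => by fun_prop) (fun ω => by fun_prop)
    (fun z ω => mulb (Real.abs_sin_le_one _) (Real.abs_sin_le_one _))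
  have k5 := key (fun z ω => Real.cos (inner ℝ z.1 (U ω)))
    (fun z => by fun_prop) (fun ω => by fun_prop) (fun z ω => Real.abs_cos_le_one _)
  have k6 := key (fun z ω => Real.sin (inner ℝ z.1 (U ω)))
    (fun z => by fun_prop) (fun ω => by fun_prop) (fun z ω => Real.abs_sin_le_one _)
  have k7 := key (fun z ω => Real.cos (inner ℝ z.2 (V ω)))
    (fun z => by fun_prop) (fun ω => by fun_prop) (fun z ω => Real.abs_cos_le_one _)
  have k8 := key (fun z ω => Real.sin (inner ℝ z.2 (V ω)))
    (fun z => by fun_prop) (fun ω => by fun_prop) (fun z ω => Real.abs_sin_le_one _)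
  unfold covS
  exact ((((k1.sub (k5.mul k7)).pow 2).add ((k2.sub (k5.mul k8)).pow 2)).add
    ((k3.sub (k6.mul k7)).pow 2)).add ((k4.sub (k6.mul k8)).pow 2)

lemma covS_of_indep (hU : Measurable U) (hV : Measurable V) (h : IndepFun U V μ) (z) :
    covS μ U V z = 0 := by
  have key : ∀ (f g : ℝ → ℝ), Measurable f → Measurable g →
      ∫ ω, f (inner ℝ z.1 (U ω)) * g (inner ℝ z.2 (V ω)) ∂μ =
      (∫ ω, f (inner ℝ z.1 (U ω)) ∂μ) * ∫ ω, g (inner ℝ z.2 (V ω)) ∂μ := by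
    intro f g hf hg
    have h2 : IndepFun (fun ω => f (inner ℝ z.1 (U ω))) (fun ω => g (inner ℝ z.2 (V ω))) μ :=
      h.comp (φ := fun x => f (inner ℝ z.1 x)) (ψ := fun x => g (inner ℝ z.2 x))
        (by fun_prop) (by fun_prop)
    exact h2.integral_fun_mul_eq_mul_integral
      (Measurable.aestronglyMeasurable (by fun_prop))
      (Measurable.aestronglyMeasurable (by fun_prop))
  unfold covS
  rw [key _ _ Real.measurable_cos Real.measurable_cos,
    key _ _ Real.measurable_cos Real.measurable_sin,
    key _ _ Real.measurable_sin Real.measurable_cos,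
    key _ _ Real.measurable_sin Real.measurable_sin]
  ring

lemma covS_integral (hU : Measurable U) (hV : Measurable V)
    (hUint : Integrable (fun ω => ‖U ω‖) μ) (hVint : Integrable (fun ω => ‖V ω‖) μ)
    (hUV : Integrable (fun ω => ‖U ω‖ * ‖V ω‖) μ)
    (m : Measure (EuclideanSpace ℝ (Fin p))) (m' : Measure (EuclideanSpace ℝ (Fin q)))
    [SFinite m] [SFinite m'] (c c' : ℝ)
    (hm : ∀ x, Integrable (fun s => 1 - Real.cos (inner ℝ s x)) m ∧
      ∫ s, (1 - Real.cos (inner ℝ s x)) ∂m = c * ‖x‖)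
    (hm' : ∀ x, Integrable (fun s => 1 - Real.cos (inner ℝ s x)) m' ∧
      ∫ s, (1 - Real.cos (inner ℝ s x)) ∂m' = c' * ‖x‖) :
    Integrable (covS μ U V) (m.prod m') ∧
      ∫ z, covS μ U V z ∂(m.prod m') = c * c' * dcov2 μ U V := by
  have H1 : Integrable (fun _ : Ω => (1:ℝ)) μ := integrable_const _
  have bd : ∀ (x y : EuclideanSpace ℝ (Fin p)) (x' y' : EuclideanSpace ℝ (Fin q)),
      ‖(‖x - y‖ * ‖x' - y'‖)‖ ≤ (‖x‖ + ‖y‖) * (‖x'‖ + ‖y'‖) := by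
    intro x y x' y'
    rw [Real.norm_of_nonneg (by positivity)]
    gcongr <;> exact norm_sub_le _ _
  have I1 : Integrable (fun ω : Ω × Ω => ‖U ω.1 - U ω.2‖ * ‖V ω.1 - V ω.2‖) (μ.prod μ) := by
    refine (((hUV.mul_prod H1).add (hUint.mul_prod hVint)).add
      ((hVint.mul_prod hUint).add (H1.mul_prod hUV))).mono' (by fun_prop)
      (Filter.Eventually.of_forall fun ω => (bd _ _ _ _).trans_eq ?_)
    simp only [Pi.add_apply]; ring
  have IU : Integrable (fun ω : Ω × Ω => ‖U ω.1 - U ω.2‖) (μ.prod μ) := by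
    refine ((hUint.mul_prod H1).add (H1.mul_prod hUint)).mono' (by fun_prop)
      (Filter.Eventually.of_forall fun ω => ?_)
    simpa using norm_sub_le (U ω.1) (U ω.2)
  have IV : Integrable (fun ω : Ω × Ω => ‖V ω.1 - V ω.2‖) (μ.prod μ) := by
    refine ((hVint.mul_prod H1).add (H1.mul_prod hVint)).mono' (by fun_prop)
      (Filter.Eventually.of_forall fun ω => ?_)
    simpa using norm_sub_le (V ω.1) (V ω.2)
  have I3 : Integrable (fun ω : Ω × Ω × Ω => ‖U ω.1 - U ω.2.1‖ * ‖V ω.1 - V ω.2.2‖)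
      (μ.prod (μ.prod μ)) := by
    refine (((hUV.mul_prod (H1.mul_prod H1)).add (hUint.mul_prod (H1.mul_prod hVint))).add
      ((hVint.mul_prod (hUint.mul_prod H1)).add (H1.mul_prod (hUint.mul_prod hVint)))).mono'
      (by fun_prop) (Filter.Eventually.of_forall fun ω => (bd _ _ _ _).trans_eq ?_)
    simp only [Pi.add_apply]; ring
  have I4 : Integrable (fun ω : Ω × Ω × Ω => ‖U ω.1 - U ω.2.2‖ * ‖V ω.1 - V ω.2.1‖)
      (μ.prod (μ.prod μ)) := by
    refine (((hUV.mul_prod (H1.mul_prod H1)).add (hUint.mul_prod (hVint.mul_prod H1))).add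
      ((hVint.mul_prod (H1.mul_prod hUint)).add (H1.mul_prod (hVint.mul_prod hUint)))).mono'
      (by fun_prop) (Filter.Eventually.of_forall fun ω => (bd _ _ _ _).trans_eq ?_)
    simp only [Pi.add_apply]; ring
  have F1 := fubini_term (μ.prod μ) m m' c c' hm hm' (fun ω => U ω.1 - U ω.2)
    (fun ω => V ω.1 - V ω.2) (by fun_prop) (by fun_prop) I1
  have F2 := fubini_term ((μ.prod μ).prod (μ.prod μ)) m m' c c' hm hm'
    (fun ω => U ω.1.1 - U ω.1.2) (fun ω => V ω.2.1 - V ω.2.2) (by fun_prop) (by fun_prop)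
    (IU.mul_prod IV)
  have F3 := fubini_term (μ.prod (μ.prod μ)) m m' c c' hm hm' (fun ω => U ω.1 - U ω.2.1)
    (fun ω => V ω.1 - V ω.2.2) (by fun_prop) (by fun_prop) I3
  have F4 := fubini_term (μ.prod (μ.prod μ)) m m' c c' hm hm' (fun ω => U ω.1 - U ω.2.2)
    (fun ω => V ω.1 - V ω.2.1) (by fun_prop) (by fun_prop) I4
  have G := ((HI.add F1 F2).sub F3).sub F4
  have e2 := integral_prod_mul (μ := μ.prod μ) (ν := μ.prod μ)
    (fun ω => ‖U ω.1 - U ω.2‖) (fun ω => ‖V ω.1 - V ω.2‖)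
  rw [e2] at G
  have hfun : covS μ U V = _ := funext fun z => (D_identity μ
    (fun ω => Real.cos (inner ℝ z.1 (U ω))) (fun ω => Real.sin (inner ℝ z.1 (U ω)))
    (fun ω => Real.cos (inner ℝ z.2 (V ω))) (fun ω => Real.sin (inner ℝ z.2 (V ω)))
    (by fun_prop) (by fun_prop) (by fun_prop) (by fun_prop)
    (fun ω => Real.abs_cos_le_one _) (fun ω => Real.abs_sin_le_one _)
    (fun ω => Real.abs_cos_le_one _) (fun ω => Real.abs_sin_le_one _)).symm
  simp only [inner_sub_right, Real.cos_sub] at G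
  rw [← hfun] at G
  refine ⟨G.1, G.2.trans ?_⟩
  unfold dcov2
  ring

lemma int_of_shift (hU : Measurable U) (hV : Measurable V)
    (hUint : Integrable (fun ω => ‖U ω‖) μ) (hVint : Integrable (fun ω => ‖V ω‖) μ)
    (u v) (h : Integrable (fun ω => ‖U ω - u‖ * ‖V ω - v‖) μ) :
    Integrable (fun ω => ‖U ω‖ * ‖V ω‖) μ := by
  refine ((h.add (((hUint.add (integrable_const ‖u‖)).mul_const ‖v‖))).add
    ((hVint.add (integrable_const ‖v‖)).const_mul ‖u‖)|>.add (integrable_const (‖u‖ * ‖v‖))).mono'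
    (by fun_prop) (Filter.Eventually.of_forall fun ω => ?_)
  rw [Real.norm_of_nonneg (by positivity)]
  simp only [Pi.add_apply]
  have h1 : ‖U ω‖ ≤ ‖U ω - u‖ + ‖u‖ := by simpa using norm_add_le (U ω - u) u
  have h2 : ‖V ω‖ ≤ ‖V ω - v‖ + ‖v‖ := by simpa using norm_add_le (V ω - v) v
  have h3 := norm_sub_le (U ω) u
  have h4 := norm_sub_le (V ω) v
  calc ‖U ω‖ * ‖V ω‖ ≤ (‖U ω - u‖ + ‖u‖) * (‖V ω - v‖ + ‖v‖) := by gcongr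
    _ = ‖U ω - u‖ * ‖V ω - v‖ + ‖U ω - u‖ * ‖v‖ + ‖u‖ * ‖V ω - v‖ + ‖u‖ * ‖v‖ := by ring
    _ ≤ _ := by gcongr

lemma dcov2_pos_of_not_int (hU : Measurable U) (hV : Measurable V)
    (hUint : Integrable (fun ω => ‖U ω‖) μ) (hVint : Integrable (fun ω => ‖V ω‖) μ)
    (hUV : ¬ Integrable (fun ω => ‖U ω‖ * ‖V ω‖) μ) : 0 < dcov2 μ U V := by
  have S := int_of_shift μ U V hU hV hUint hVint
  unfold dcov2
  have n1 : ¬ Integrable (fun ω : Ω × Ω => ‖U ω.1 - U ω.2‖ * ‖V ω.1 - V ω.2‖) (μ.prod μ) := by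
    intro h
    obtain ⟨y, hy⟩ := h.prod_left_ae.exists
    exact hUV (S (U y) (V y) hy)
  have n3 : ¬ Integrable (fun ω : Ω × Ω × Ω => ‖U ω.1 - U ω.2.1‖ * ‖V ω.1 - V ω.2.2‖)
      (μ.prod (μ.prod μ)) := by
    intro h
    obtain ⟨y, hy⟩ := h.prod_left_ae.exists
    exact hUV (S (U y.1) (V y.2) hy)
  have n4 : ¬ Integrable (fun ω : Ω × Ω × Ω => ‖U ω.1 - U ω.2.2‖ * ‖V ω.1 - V ω.2.1‖)
      (μ.prod (μ.prod μ)) := by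
    intro h
    obtain ⟨y, hy⟩ := h.prod_left_ae.exists
    exact hUV (S (U y.2) (V y.1) hy)
  rw [integral_undef n1, integral_undef n3, integral_undef n4]
  · simp only [zero_add, sub_zero]
    have H1 : Integrable (fun _ : Ω => (1:ℝ)) μ := integrable_const _
    have IU : Integrable (fun ω : Ω × Ω => ‖U ω.1 - U ω.2‖) (μ.prod μ) := by
      refine ((hUint.mul_prod H1).add (H1.mul_prod hUint)).mono' (by fun_prop)
        (Filter.Eventually.of_forall fun ω => ?_)
      simpa using norm_sub_le (U ω.1) (U ω.2)
    have IV : Integrable (fun ω : Ω × Ω => ‖V ω.1 - V ω.2‖) (μ.prod μ) := by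
      refine ((hVint.mul_prod H1).add (H1.mul_prod hVint)).mono' (by fun_prop)
        (Filter.Eventually.of_forall fun ω => ?_)
      simpa using norm_sub_le (V ω.1) (V ω.2)
    apply mul_pos
    · refine lt_of_le_of_ne (integral_nonneg fun ω => norm_nonneg _) fun h => hUV ?_
      rw [eq_comm, integral_eq_zero_iff_of_nonneg (fun ω => norm_nonneg _) IU] at h
      have h' : (fun ω : Ω × Ω => ‖U ω.1 - U ω.2‖ * ‖V ω.1 - V ω.2‖) =ᵐ[μ.prod μ] 0 := by
        filter_upwards [h] with ω hω
        simp only [Pi.zero_apply] at hω ⊢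
        rw [hω, zero_mul]
      obtain ⟨y, hy⟩ := ((integrable_zero _ _ _).congr h'.symm).prod_left_ae.exists
      exact S (U y) (V y) hy
    · refine lt_of_le_of_ne (integral_nonneg fun ω => norm_nonneg _) fun h => hUV ?_
      rw [eq_comm, integral_eq_zero_iff_of_nonneg (fun ω => norm_nonneg _) IV] at h
      have h' : (fun ω : Ω × Ω => ‖U ω.1 - U ω.2‖ * ‖V ω.1 - V ω.2‖) =ᵐ[μ.prod μ] 0 := by
        filter_upwards [h] with ω hω
        simp only [Pi.zero_apply] at hω ⊢
        rw [hω, mul_zero]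
      obtain ⟨y, hy⟩ := ((integrable_zero _ _ _).congr h'.symm).prod_left_ae.exists
      exact S (U y) (V y) hy

end final

/-- The distance covariance of two random vectors with finite first moments vanishes
if and only if they are independent. -/
theorem dcov2_eq_zero_iff_indepFun {Ω : Type*} [MeasurableSpace Ω] (μ : Measure Ω)
    [IsProbabilityMeasure μ]
    {p q : ℕ} (U : Ω → EuclideanSpace ℝ (Fin p)) (V : Ω → EuclideanSpace ℝ (Fin q))
    (hU : Measurable U) (hV : Measurable V)
    (hUint : Integrable (fun ω => ‖U ω‖) μ) (hVint : Integrable (fun ω => ‖V ω‖) μ) :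
    Real.sqrt (dcov2 μ U V) = 0 ↔ IndepFun U V μ := by
  by_cases hUV : Integrable (fun ω => ‖U ω‖ * ‖V ω‖) μ
  · obtain ⟨m, c, hs, ho, hc, hm⟩ := norm_repr p
    obtain ⟨m', c', hs', ho', hc', hm'⟩ := norm_repr q
    obtain ⟨hI, hE⟩ := covS_integral μ U V hU hV hUint hVint hUV m m' c c' hm hm'
    have hnn : 0 ≤ covS μ U V := fun z => by
      simp only [covS, Pi.zero_apply]; positivity
    constructor
    · intro h
      have h0 : dcov2 μ U V ≤ 0 := Real.sqrt_eq_zero'.1 h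
      have h1 : ∫ z, covS μ U V z ∂(m.prod m') = 0 := by
        refine le_antisymm ?_ (integral_nonneg hnn)
        rw [hE]
        exact mul_nonpos_of_nonneg_of_nonpos (by positivity) h0
      rw [integral_eq_zero_iff_of_nonneg hnn hI] at h1
      have h2 := (Continuous.ae_eq_iff_eq (m.prod m') (covS_continuous μ U V hU hV)
        continuous_zero).1 h1
      exact indep_of_cov μ U V hU hV fun z => congrFun h2 z
    · intro h
      have : c * c' * dcov2 μ U V = 0 := by
        rw [← hE]
        simp [covS_of_indep μ U V hU hV h]
      rcases mul_eq_zero.1 this with h | h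
      · exact absurd h (by positivity)
      · rw [h, Real.sqrt_zero]
  · constructor
    · intro h
      exact absurd (Real.sqrt_eq_zero'.1 h) (not_le.2
        (dcov2_pos_of_not_int μ U V hU hV hUint hVint hUV))
    · intro h
      exact absurd ((h.comp measurable_norm measurable_norm).integrable_mul hUint hVint) hUV
end
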